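/- The forgetful functor V•_∞ : Ban_∞ → CMet•_∞, sending a generalized complex Banach space to its underlying complete generalized metric space pointed at 0, is monadic: it has a left adjoint and the comparison functor from Ban_∞ to the Eilenberg–Moore category of the induced monad is an equivalence of categories. -/

import Mathlib

/-!
The proof applies Beck's monadicity theorem to `V•_∞`.

*Left adjoint.* By the Hahn–Banach theorem (`GBanach.enorm_le_iff`), which holds for extended norms,
a generalized Banach space `G` embeds isometrically, hence as a closed subspace, into the space of
all functions on its set `G.Dual1` of functionals of norm at most `1`, with the extended sup norm
(`GBanach.isometry_J`). For a pointed space `X`, let `X.Dual1` be the set of its pointed nonexpanding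
complex functions; the free space on `X` is the closed linear span of the evaluations in the
functions on `X.Dual1`. A nonexpanding pointed map `f : X → G` induces `G.Dual1 → X.Dual1`, hence a
linear nonexpanding map `PCMetInf.push f` between the function spaces; it carries evaluations into
the closed subspace `G`, so it restricts to the required extension of `f`.

*Split pairs.* Let `q : B → C` be a split coequalizer, in pointed metric spaces, of a pair `f, g` of
morphisms of `Ban_∞`, with section `s`. Then `C` carries the linear structure
`x + y = q (s x + s y)`, `c • x = q (c • s x)`, for which `q` is linear; its metric is translation
invariant and homogeneous because `s` is isometric and `q` is nonexpanding. So `C` underlies a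
generalized Banach space, which is the coequalizer of `f` and `g` in `Ban_∞` (`SplitPair.isColimit`)
and is sent by `V•_∞` to the given split coequalizer (`SplitPair.preserves`). Finally `V•_∞` reflects
isomorphisms, as the inverse of a bijective linear map is linear.
-/


open CategoryTheory
open scoped ENNReal

/-- A generalized complex Banach space: a complex vector space with an extended norm
(allowed to take the value `∞`), complete with respect to the induced extended metric. -/
structure GBanach : Type 1 where
  carrier : Type
  [grp : AddCommGroup carrier]
  [mod : Module ℂ carrier]
  enorm : carrier → ℝ≥0∞
  enorm_eq_zero_iff : ∀ x, enorm x = 0 ↔ x = 0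
  enorm_smul : ∀ (c : ℂ) (x : carrier), enorm (c • x) = ‖c‖₊ * enorm x
  enorm_add_le : ∀ x y, enorm (x + y) ≤ enorm x + enorm y
  [emet : EMetricSpace carrier]
  edist_eq : ∀ x y : carrier, edist x y = enorm (x - y)
  [compl : CompleteSpace carrier]

attribute [instance] GBanach.grp GBanach.mod GBanach.emet GBanach.compl

/-- The category `Ban_∞` of generalized complex Banach spaces and linear maps of
norm `≤ 1`. -/
instance : Category GBanach where
  Hom X Y := { f : X.carrier →ₗ[ℂ] Y.carrier // ∀ x, Y.enorm (f x) ≤ X.enorm x }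
  id X := ⟨LinearMap.id, fun _ => le_rfl⟩
  comp f g := ⟨g.1.comp f.1, fun x => le_trans (g.2 _) (f.2 x)⟩
  id_comp f := Subtype.ext (LinearMap.ext fun _ => rfl)
  comp_id f := Subtype.ext (LinearMap.ext fun _ => rfl)
  assoc f g h := Subtype.ext (LinearMap.ext fun _ => rfl)

/-- The category `CMet•_∞` of pointed complete generalized metric spaces (extended metric
spaces) and basepoint-preserving nonexpanding maps. -/
structure PCMetInf : Type 1 where
  carrier : Type
  [met : EMetricSpace carrier]
  [compl : CompleteSpace carrier]
  pt : carrier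

attribute [instance] PCMetInf.met PCMetInf.compl

instance : Category PCMetInf where
  Hom X Y := { f : X.carrier → Y.carrier // LipschitzWith 1 f ∧ f X.pt = Y.pt }
  id X := ⟨id, LipschitzWith.id, rfl⟩
  comp f g := ⟨g.1 ∘ f.1, by simpa using g.2.1.comp f.2.1,
    by rw [Function.comp_apply, f.2.2, g.2.2]⟩
  id_comp f := Subtype.ext rfl
  comp_id f := Subtype.ext rfl
  assoc f g h := Subtype.ext rfl

/-- The forgetful functor `V•_∞ : Ban_∞ ⥤ CMet•_∞`, sending a generalized Banach space to
its underlying complete generalized metric space pointed at `0`. -/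
def Vpinf : GBanach ⥤ PCMetInf where
  obj X := { carrier := X.carrier, pt := 0 }
  map {X Y} f := ⟨f.1,
    LipschitzWith.of_edist_le fun x y => by
      rw [X.edist_eq, Y.edist_eq, ← map_sub]
      exact f.2 _,
    map_zero f.1⟩
  map_id X := Subtype.ext rfl
  map_comp f g := Subtype.ext rfl

open CategoryTheory.Limits
open scoped UniformConvergence

/-! ### Functionals on generalized Banach spaces -/

namespace GBanach

lemma enorm_zero' (G : GBanach) : G.enorm 0 = 0 := (G.enorm_eq_zero_iff 0).2 rfl

lemma edist_zero (G : GBanach) (x : G.carrier) : edist x 0 = G.enorm x := by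
  rw [G.edist_eq, sub_zero]

lemma enorm_smul' (G : GBanach) (c : ℂ) (x : G.carrier) :
    G.enorm (c • x) = ‖c‖ₑ * G.enorm x := G.enorm_smul c x

/-- The subspace of vectors of finite norm. -/
def fin (G : GBanach) : Submodule ℂ G.carrier where
  carrier := {x | G.enorm x ≠ ∞}
  zero_mem' := by simp [G.enorm_zero']
  add_mem' {x y} hx hy :=
    ne_top_of_le_ne_top (ENNReal.add_ne_top.2 ⟨hx, hy⟩) (G.enorm_add_le x y)
  smul_mem' c x hx := by
    change G.enorm (c • x) ≠ ∞
    rw [G.enorm_smul]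
    exact ENNReal.mul_ne_top ENNReal.coe_ne_top hx

/-- A copy of `G.fin` without the subspace topology, to carry the real-valued norm. -/
def Fin (G : GBanach) : Type := G.fin

instance (G : GBanach) : AddCommGroup G.Fin := inferInstanceAs (AddCommGroup G.fin)

instance (G : GBanach) : Module ℂ G.Fin := inferInstanceAs (Module ℂ G.fin)

/-- The real-valued norm on the vectors of finite norm. -/
noncomputable instance (G : GBanach) : NormedAddCommGroup G.Fin :=
  AddGroupNorm.toNormedAddCommGroup
    { toFun := fun x => (G.enorm x.1).toReal
      map_zero' := by
        change (G.enorm 0).toReal = 0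
        simp [G.enorm_zero']
      add_le' := fun x y => by
        rw [← ENNReal.toReal_add x.2 y.2]
        exact ENNReal.toReal_mono (ENNReal.add_ne_top.2 ⟨x.2, y.2⟩) (G.enorm_add_le _ _)
      neg' := fun x => by
        have := G.enorm_smul' (-1) x.1
        simp only [neg_smul, one_smul, enorm_neg, enorm_one, one_mul] at this
        change (G.enorm (-x.1)).toReal = _
        rw [this]
      eq_zero_of_map_eq_zero' := fun x hx => by
        rcases (ENNReal.toReal_eq_zero_iff _).1 hx with h | h
        · exact Subtype.ext ((G.enorm_eq_zero_iff _).1 h)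
        · exact absurd h x.2 }

noncomputable instance (G : GBanach) : NormedSpace ℂ G.Fin where
  norm_smul_le c x := by
    change (G.enorm (c • x.1)).toReal ≤ _ * (G.enorm x.1).toReal
    rw [G.enorm_smul, ENNReal.toReal_mul]
    simp

/-- The linear functionals of norm at most `1`. -/
def Dual1 (G : GBanach) : Type :=
  {φ : G.carrier →ₗ[ℂ] ℂ // ∀ x, ‖φ x‖ₑ ≤ G.enorm x}

/-- Hahn–Banach for extended norms: the functionals of norm at most `1` are norming. On vectors
of finite norm this is the classical theorem, followed by an arbitrary linear extension; a
vector of infinite norm lies outside `G.fin`, so it takes arbitrary values under functionals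
vanishing on `G.fin`. -/
lemma enorm_le_iff (G : GBanach) (x : G.carrier) (r : ℝ≥0∞) :
    G.enorm x ≤ r ↔ ∀ φ : G.Dual1, ‖φ.1 x‖ₑ ≤ r := by
  refine ⟨fun h φ => (φ.2 x).trans h, fun h => ?_⟩
  by_cases hx : G.enorm x = ∞
  · have hx' : x ∉ G.fin := fun h => h hx
    rw [hx, top_le_iff]
    refine ENNReal.eq_top_of_forall_nnreal_le fun s => ?_
    obtain ⟨φ, h0, h1⟩ :=
      LinearMap.exists_extend_of_notMem (0 : G.fin →ₗ[ℂ] ℂ) hx' ((s : ℝ) : ℂ)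
    have hφ : ∀ y, ‖φ y‖ₑ ≤ G.enorm y := fun y => by
      by_cases hy : G.enorm y = ∞
      · simp [hy]
      · have : φ y = 0 := DFunLike.congr_fun h0 (⟨y, hy⟩ : G.fin)
        simp [this]
    have := h ⟨φ, hφ⟩
    simpa [h1, enorm_eq_nnnorm] using this
  · obtain ⟨g, hg, hgx⟩ := exists_dual_vector'' ℂ (E := G.Fin) ⟨x, hx⟩
    let gl : G.Fin →ₗ[ℂ] ℂ := g.toLinearMap
    obtain ⟨φ, h0⟩ := LinearMap.exists_extend (p := G.fin) gl
    have h0' : ∀ y (hy : G.enorm y ≠ ∞), φ y = g ⟨y, hy⟩ :=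
      fun y hy => DFunLike.congr_fun h0 (⟨y, hy⟩ : G.fin)
    have hφ : ∀ y, ‖φ y‖ₑ ≤ G.enorm y := fun y => by
      by_cases hy : G.enorm y = ∞
      · simp [hy]
      · rw [h0' y hy, ← ofReal_norm, ← ENNReal.ofReal_toReal hy]
        refine ENNReal.ofReal_le_ofReal ?_
        exact (g.le_of_opNorm_le hg _).trans (by rw [one_mul]; exact le_rfl)
    have hgx' : g ⟨x, hx⟩ = ((G.enorm x).toReal : ℂ) := hgx
    refine le_trans ?_ (h ⟨φ, hφ⟩)
    rw [h0' x hx, hgx', ← ofReal_norm]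
    simp [ENNReal.ofReal_toReal hx]

/-- The canonical embedding of `G` into the functions on its dual unit ball. -/
def J (G : GBanach) : G.carrier →ₗ[ℂ] (G.Dual1 →ᵤ ℂ) where
  toFun x := UniformFun.ofFun fun φ => φ.1 x
  map_add' x y := funext fun φ => map_add φ.1 x y
  map_smul' c x := funext fun φ => map_smul φ.1 c x

lemma isometry_J (G : GBanach) : Isometry G.J := fun x y => by
  refine eq_of_forall_ge_iff fun r => ?_
  rw [UniformFun.edist_le, G.edist_eq, enorm_le_iff]
  refine forall_congr' fun φ => ?_
  rw [map_sub, ← edist_eq_enorm_sub]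
  rfl

/-- A morphism of `Ban_∞` from a linear nonexpanding map. -/
def ofLip {G H : GBanach} (f : G.carrier →ₗ[ℂ] H.carrier) (hf : LipschitzWith 1 f) : G ⟶ H :=
  ⟨f, fun x => by
    have := hf.edist_le_mul x 0
    rwa [map_zero, edist_zero, edist_zero, ENNReal.coe_one, one_mul] at this⟩

lemma lipschitz {G H : GBanach} (f : G ⟶ H) : LipschitzWith 1 f.1 := (Vpinf.map f).2.1

end GBanach

/-! ### The free generalized Banach space -/

namespace PCMetInf

variable (X : PCMetInf)

/-- The basepoint-preserving nonexpanding functions `X → ℂ`. -/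
def Dual1 : Type := {f : X.carrier → ℂ // LipschitzWith 1 f ∧ f X.pt = 0}

/-- Evaluation, as a map from `X` to the functions on `X.Dual1`. -/
def ev (x : X.carrier) : X.Dual1 →ᵤ ℂ := UniformFun.ofFun fun f => f.1 x

lemma lipschitz_ev : LipschitzWith 1 X.ev := UniformFun.lipschitzWith_iff.2 fun f => f.2.1

lemma ev_pt : X.ev X.pt = 0 := funext fun f => f.2.2

/-- The closed linear span of the evaluations. -/
noncomputable def freeSub : Submodule ℂ (X.Dual1 →ᵤ ℂ) :=
  (Submodule.span ℂ (Set.range X.ev)).topologicalClosure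

lemma ev_mem (x : X.carrier) : X.ev x ∈ X.freeSub :=
  Submodule.le_topologicalClosure _ (Submodule.subset_span ⟨x, rfl⟩)

lemma isClosed_freeSub : IsClosed (X.freeSub : Set (X.Dual1 →ᵤ ℂ)) :=
  Submodule.isClosed_topologicalClosure _

lemma freeSub_le {S : Submodule ℂ (X.Dual1 →ᵤ ℂ)} (hS : IsClosed (S : Set (X.Dual1 →ᵤ ℂ)))
    (h : ∀ x, X.ev x ∈ S) : X.freeSub ≤ S :=
  Submodule.topologicalClosure_minimal _
    (Submodule.span_le.2 (by rintro _ ⟨x, rfl⟩; exact h x)) hS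

/-- The free generalized Banach space on `X`. -/
noncomputable def free : GBanach where
  carrier := X.freeSub
  enorm v := edist v 0
  enorm_eq_zero_iff v := edist_eq_zero
  enorm_smul c v := by
    change (⨆ f, edist _ _) = _ * ⨆ f, edist _ _
    rw [ENNReal.mul_iSup]
    refine iSup_congr fun f => ?_
    change edist (c • (v.1 : X.Dual1 → ℂ) f) 0 = _ * edist ((v.1 : X.Dual1 → ℂ) f) 0
    rw [edist_zero_right, edist_zero_right, enorm_smul]
    rfl
  enorm_add_le v w := by
    refine UniformFun.edist_le.2 fun f => ?_
    refine le_trans ?_ (add_le_add (UniformFun.edist_eval_le (x := f))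
      (UniformFun.edist_eval_le (x := f)))
    change edist ((v.1 : X.Dual1 → ℂ) f + (w.1 : X.Dual1 → ℂ) f) 0 ≤
      edist ((v.1 : X.Dual1 → ℂ) f) 0 + edist ((w.1 : X.Dual1 → ℂ) f) 0
    simp only [edist_zero_right]
    exact enorm_add_le _ _
  edist_eq v w := by
    change (⨆ f, edist _ _) = ⨆ f, edist _ _
    refine iSup_congr fun f => ?_
    change edist ((v.1 : X.Dual1 → ℂ) f) ((w.1 : X.Dual1 → ℂ) f) =
      edist ((v.1 : X.Dual1 → ℂ) f - (w.1 : X.Dual1 → ℂ) f) 0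
    rw [edist_zero_right, edist_eq_enorm_sub]
  compl := X.isClosed_freeSub.completeSpace_coe

/-- The unit of the adjunction. -/
noncomputable def unit : X ⟶ Vpinf.obj X.free :=
  ⟨fun x => (⟨X.ev x, X.ev_mem x⟩ : X.freeSub),
    fun x y => X.lipschitz_ev x y, Subtype.ext X.ev_pt⟩

variable {X} {G : GBanach} (f : X ⟶ Vpinf.obj G)

/-- Precomposition with `f` turns functionals on `G` into nonexpanding functions on `X`. -/
def pull (φ : G.Dual1) : X.Dual1 :=
  ⟨fun x => φ.1 (f.1 x), by
    refine LipschitzWith.of_edist_le fun x y => ?_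
    have h := f.2.1.edist_le_mul x y
    rw [ENNReal.coe_one, one_mul] at h
    refine le_trans ?_ h
    have key (a b : G.carrier) : edist (φ.1 a) (φ.1 b) ≤ edist a b := by
      rw [edist_eq_enorm_sub, ← map_sub, G.edist_eq]
      exact φ.2 _
    exact key _ _, by
    change φ.1 (f.1 X.pt) = 0
    rw [f.2.2]
    exact map_zero φ.1⟩

/-- The linear map dual to `pull`. -/
def push : (X.Dual1 →ᵤ ℂ) →ₗ[ℂ] (G.Dual1 →ᵤ ℂ) where
  toFun v := UniformFun.ofFun fun φ => UniformFun.toFun v (pull f φ)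
  map_add' _ _ := rfl
  map_smul' _ _ := rfl

lemma lipschitz_push : LipschitzWith 1 (push f) :=
  UniformFun.lipschitzWith_iff.2 fun φ => UniformFun.lipschitzWith_eval (pull f φ)

lemma push_ev (x : X.carrier) : push f (X.ev x) = G.J (f.1 x) := rfl

lemma push_mem (v : X.freeSub) : push f v.1 ∈ LinearMap.range G.J := by
  have hc : IsClosed (LinearMap.range G.J : Set (G.Dual1 →ᵤ ℂ)) := by
    rw [LinearMap.coe_range]
    exact G.isometry_J.isClosedEmbedding.isClosed_range
  exact X.freeSub_le (S := (LinearMap.range G.J).comap (push f))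
    (hc.preimage (lipschitz_push f).continuous) (fun x => ⟨f.1 x, rfl⟩) v.2

/-- The linear extension of `f` to the free space: as `G.J` is an isometry onto a closed subspace,
the image of the closed span of `X` under `push f` stays in the range of `G.J`. -/
noncomputable def liftLin : X.freeSub →ₗ[ℂ] G.carrier :=
  (LinearEquiv.ofInjective G.J G.isometry_J.injective).symm.toLinearMap ∘ₗ
    ((push f) ∘ₗ X.freeSub.subtype).codRestrict _ (push_mem f)

lemma J_liftLin (v : X.freeSub) : G.J (liftLin f v) = push f v.1 := by
  have := (LinearEquiv.ofInjective G.J G.isometry_J.injective).apply_symm_apply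
    ⟨push f v.1, push_mem f v⟩
  exact congrArg Subtype.val this

lemma lipschitz_liftLin : LipschitzWith 1 (liftLin f) := fun v w => by
  rw [← G.isometry_J.edist_eq, J_liftLin, J_liftLin]
  exact lipschitz_push f v.1 w.1

/-- The unique extension of `f` to a morphism on the free space. -/
noncomputable def lift : X.free ⟶ G :=
  GBanach.ofLip (G := X.free) (liftLin f) (lipschitz_liftLin f)

lemma unit_lift : X.unit ≫ Vpinf.map (lift f) = f := by
  refine Subtype.ext (funext fun x => G.isometry_J.injective ?_)
  exact J_liftLin f ⟨X.ev x, X.ev_mem x⟩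

lemma free_hom_ext {g g' : X.free ⟶ G}
    (h : X.unit ≫ Vpinf.map g = X.unit ≫ Vpinf.map g') : g = g' := by
  let E : Submodule ℂ X.freeSub := LinearMap.eqLocus (M := X.freeSub) (M₂ := G.carrier) g.1 g'.1
  have hE : IsClosed (E : Set X.freeSub) :=
    isClosed_eq (GBanach.lipschitz g).continuous (GBanach.lipschitz g').continuous
  have hE' : IsClosed (E.map X.freeSub.subtype : Set (X.Dual1 →ᵤ ℂ)) := by
    rw [Submodule.map_coe]
    exact X.isClosed_freeSub.isClosedEmbedding_subtypeVal.isClosedMap _ hE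
  have key := X.freeSub_le hE' fun x =>
    ⟨⟨X.ev x, X.ev_mem x⟩, congrFun (congrArg Subtype.val h) x, rfl⟩
  refine Subtype.ext (LinearMap.ext fun v => ?_)
  obtain ⟨w, hw, hwv⟩ := key v.2
  obtain rfl : w = v := Subtype.ext hwv
  exact hw

variable (X G) in
/-- The universal property of the free space. -/
noncomputable def freeEquiv : (X.free ⟶ G) ≃ (X ⟶ Vpinf.obj G) where
  toFun g := X.unit ≫ Vpinf.map g
  invFun f := lift f
  left_inv g := free_hom_ext (unit_lift _)
  right_inv f := unit_lift f

end PCMetInf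

/-- The free functor is left adjoint to `V•_∞`. -/
noncomputable def freeAdj :
    Adjunction.leftAdjointOfEquiv (G := Vpinf) (F_obj := PCMetInf.free) PCMetInf.freeEquiv
      (fun _ _ _ _ _ => rfl) ⊣ Vpinf :=
  Adjunction.adjunctionOfEquivLeft _ _

/-! ### Reflection of isomorphisms and coequalizers of split pairs -/

instance : Vpinf.ReflectsIsomorphisms where
  reflects {G H} f hf := by
    let e := inv (Vpinf.map f)
    have h1 : ∀ x : G.carrier, e.1 (f.1 x) = x :=
      fun x => congrFun (congrArg Subtype.val (IsIso.hom_inv_id (Vpinf.map f))) x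
    have h2 : ∀ y : H.carrier, f.1 (e.1 y) = y :=
      fun y => congrFun (congrArg Subtype.val (IsIso.inv_hom_id (Vpinf.map f))) y
    let E := LinearEquiv.ofBijective f.1
      ⟨Function.LeftInverse.injective h1, Function.RightInverse.surjective h2⟩
    have hE : ∀ y, E.symm y = e.1 y := fun y => 
      E.symm_apply_eq.2 (h2 y).symm
    refine ⟨GBanach.ofLip E.symm.toLinearMap ?_, ?_, ?_⟩
    · intro x y
      change edist (E.symm x) (E.symm y) ≤ _
      rw [hE, hE]
      exact e.2.1 x y
    · exact Subtype.ext (LinearMap.ext fun x => E.symm_apply_apply x)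
    · exact Subtype.ext (LinearMap.ext fun x => E.apply_symm_apply x)

namespace SplitPair

variable {A B : GBanach} {f g : A ⟶ B} {C : PCMetInf} {q : Vpinf.obj B ⟶ C}
  (t : IsSplitCoequalizer (Vpinf.map f) (Vpinf.map g) q)

/-- The section of `q`, on elements. -/
def sec : C.carrier → B.carrier := t.rightSection.1

/-- The quotient map, on elements. -/
def quo (_ : IsSplitCoequalizer (Vpinf.map f) (Vpinf.map g) q) : B.carrier → C.carrier := q.1

lemma quo_sec (c : C.carrier) : quo t (sec t c) = c :=
  congrFun (congrArg Subtype.val t.rightSection_π) c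

lemma sec_edist (c d : C.carrier) : edist (sec t c) (sec t d) ≤ edist c d :=
  (t.rightSection.2.1 c d).trans_eq (one_mul _)

lemma quo_edist (c d : B.carrier) : edist (quo t c) (quo t d) ≤ edist c d :=
  (q.2.1 c d).trans_eq (one_mul _)

/-- The element-level content of the splitting `t.leftSection`. -/
lemma exists_lift (b : B.carrier) : ∃ a : A.carrier, g.1 a = b ∧ f.1 a = sec t (quo t b) :=
  ⟨t.leftSection.1 b, congrFun (congrArg Subtype.val t.leftSection_bottom) b,
    congrFun (congrArg Subtype.val t.leftSection_top) b⟩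

lemma quo_cond (a : A.carrier) : quo t (f.1 a) = quo t (g.1 a) :=
  congrFun (congrArg Subtype.val t.condition) a

lemma quo_pt : quo t 0 = C.pt := q.2.2

lemma sec_pt : sec t C.pt = 0 := t.rightSection.2.2

/-- `q` identifies a sum with the sum of the chosen representatives. -/
lemma quo_add (b b' : B.carrier) :
    quo t (b + b') = quo t (sec t (quo t b) + sec t (quo t b')) := by
  obtain ⟨a, rfl, ha⟩ := exists_lift t b
  obtain ⟨a', rfl, ha'⟩ := exists_lift t b'
  rw [← ha, ← ha', ← map_add, ← map_add, quo_cond]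

lemma quo_smul (c : ℂ) (b : B.carrier) : quo t (c • b) = quo t (c • sec t (quo t b)) := by
  obtain ⟨a, rfl, ha⟩ := exists_lift t b
  rw [← ha, ← map_smul, ← map_smul, quo_cond]

/-- The group structure on `C` making `q` additive; its zero is the basepoint by definition, so
that `Vpinf.obj (coeq t)` is `C` on the nose. -/
@[reducible]
def grp : AddCommGroup C.carrier :=
  letI : Add C.carrier := ⟨fun x y => quo t (sec t x + sec t y)⟩
  letI : Zero C.carrier := ⟨C.pt⟩
  letI : Neg C.carrier := ⟨fun x => quo t ((-1 : ℂ) • sec t x)⟩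
  have hadd (x y : C.carrier) : x + y = quo t (sec t x + sec t y) := rfl
  have hq (b b' : B.carrier) : quo t b + quo t b' = quo t (b + b') := (quo_add t b b').symm
  have h0 : (0 : C.carrier) = quo t 0 := (quo_pt t).symm
  { add := (· + ·)
    zero := 0
    neg := fun x => -x
    nsmul := nsmulRec
    zsmul := zsmulRec
    add_assoc := fun x y z => by
      rw [← quo_sec t x, ← quo_sec t y, ← quo_sec t z, hq, hq, hq, hq, add_assoc]
    zero_add := fun x => by rw [← quo_sec t x, h0, hq, zero_add]
    add_zero := fun x => by rw [← quo_sec t x, h0, hq, add_zero]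
    add_comm := fun x y => by rw [hadd, hadd, add_comm]
    neg_add_cancel := fun x => by
      have h := hq ((-1 : ℂ) • sec t x) (sec t x)
      have h' : (-1 : ℂ) • sec t x + sec t x = 0 := by rw [neg_one_smul, neg_add_cancel]
      rw [quo_sec, h', ← h0] at h
      exact h }

/-- The scalar multiplication on `C` making `q` linear. -/
@[reducible]
def mod : letI := grp t; Module ℂ C.carrier :=
  letI := grp t
  letI : SMul ℂ C.carrier := ⟨fun c x => quo t (c • sec t x)⟩
  have hq (b b' : B.carrier) : quo t b + quo t b' = quo t (b + b') := (quo_add t b b').symm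
  have hs (c : ℂ) (b : B.carrier) : c • quo t b = quo t (c • b) := (quo_smul t c b).symm
  have h0 : (0 : C.carrier) = quo t 0 := (quo_pt t).symm
  { one_smul := fun x => by rw [← quo_sec t x, hs, one_smul]
    mul_smul := fun c d x => by rw [← quo_sec t x, hs, hs, hs, mul_smul]
    smul_zero := fun c => by rw [h0, hs, smul_zero]
    smul_add := fun c x y => by
      rw [← quo_sec t x, ← quo_sec t y, hq, hs, hs, hs, hq, smul_add]
    add_smul := fun c d x => by rw [← quo_sec t x, hs, hs, hs, hq, add_smul]
    zero_smul := fun x => by rw [← quo_sec t x, hs, zero_smul, h0] }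

/-- The generalized Banach space structure on `C`, with norm the distance to the basepoint. As
`sec` is isometric and `quo` nonexpanding, translations by `z` and scalings by `c` are, respectively,
nonexpanding and `|c|`-Lipschitz on `C`; applying this to `-z` and `c⁻¹` too gives equalities. -/
def coeq : GBanach :=
  letI := grp t
  letI := mod t
  have hadd (x y : C.carrier) : x + y = quo t (sec t x + sec t y) := rfl
  have hsmul (c : ℂ) (x : C.carrier) : c • x = quo t (c • sec t x) := rfl
  have htr (x y z : C.carrier) : edist (x + z) (y + z) ≤ edist x y := by
    rw [hadd, hadd]
    refine (quo_edist t _ _).trans (le_trans (le_of_eq ?_) (sec_edist t x y))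
    rw [B.edist_eq, B.edist_eq, add_sub_add_right_eq_sub]
  have hsm (c : ℂ) (x : C.carrier) : edist (c • x) 0 ≤ ‖c‖ₑ * edist x 0 := by
    have h0 : (0 : C.carrier) = quo t 0 := (quo_pt t).symm
    have hs0 : sec t (0 : C.carrier) = 0 := sec_pt t
    calc edist (c • x) 0 ≤ edist (c • sec t x) 0 := by
          rw [hsmul, h0]; exact quo_edist t _ _
      _ = ‖c‖ₑ * edist (sec t x) (sec t 0) := by
          rw [hs0, GBanach.edist_zero, GBanach.edist_zero, GBanach.enorm_smul']
      _ ≤ _ := by gcongr; exact sec_edist t x 0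
  have hsub (x y : C.carrier) : edist x y = edist (x - y) 0 := by
    refine le_antisymm ?_ ?_
    · simpa using htr (x - y) 0 y
    · simpa [sub_eq_add_neg] using htr x y (-y)
  { carrier := C.carrier
    grp := grp t
    mod := mod t
    enorm := fun x => edist x 0
    enorm_eq_zero_iff := fun x => edist_eq_zero
    enorm_smul := fun c x => by
      refine le_antisymm (hsm c x) ?_
      by_cases hc : c = 0
      · simp [hc]
      · have h := hsm c⁻¹ (c • x)
        rw [inv_smul_smul₀ hc] at h
        calc _ ≤ ‖c‖ₑ * (‖c⁻¹‖ₑ * edist (c • x) 0) := by gcongr; exact le_rfl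
          _ = edist (c • x) 0 := by
            rw [← mul_assoc, ← enorm_mul, mul_inv_cancel₀ hc, enorm_one, one_mul]
    enorm_add_le := fun x y => by
      refine (edist_triangle _ y _).trans ?_
      gcongr
      simpa using htr x 0 y
    edist_eq := hsub }

/-- The quotient map as a morphism of `Ban_∞`. -/
def π : B ⟶ coeq t :=
  GBanach.ofLip (H := coeq t)
    (letI := grp t; letI := mod t
     { toFun := quo t, map_add' := quo_add t, map_smul' := quo_smul t }) q.2.1

lemma π_cond : f ≫ π t = g ≫ π t := Subtype.ext (LinearMap.ext fun a => quo_cond t a)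

/-- A morphism coequalizing `f` and `g` is determined by its values on the representatives
chosen by the section. -/
lemma desc_eq {D : GBanach} (k : B ⟶ D) (hk : f ≫ k = g ≫ k) (b : B.carrier) :
    k.1 (sec t (quo t b)) = k.1 b := by
  obtain ⟨a, rfl, ha⟩ := exists_lift t b
  rw [← ha]
  exact congrArg (fun m => m.1 a) hk

/-- The factorization of a morphism coequalizing `f` and `g`. -/
def desc {D : GBanach} (k : B ⟶ D) (hk : f ≫ k = g ≫ k) : coeq t ⟶ D :=
  GBanach.ofLip (G := coeq t)
    (letI := grp t; letI := mod t
     { toFun := fun c => k.1 (sec t c)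
       map_add' := fun x y => (desc_eq t k hk _).trans (map_add k.1 _ _)
       map_smul' := fun c x => (desc_eq t k hk _).trans (map_smul k.1 _ _) })
    fun x y => (GBanach.lipschitz k _ _).trans (mul_le_mul_right (sec_edist t x y) _)

/-- `π t` is the coequalizer of `f` and `g` in `Ban_∞`. -/
def isColimit : IsColimit (Cofork.ofπ (π t) (π_cond t)) :=
  Cofork.IsColimit.mk' _ fun s =>
    ⟨desc t s.π s.condition,
      Subtype.ext (LinearMap.ext fun b => desc_eq t s.π s.condition b),
      fun {m} hm => Subtype.ext (LinearMap.ext fun c => by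
        have := congrArg (fun k => k.1 (sec t c)) hm
        refine Eq.trans ?_ this
        exact congrArg m.1 (quo_sec t c).symm)⟩

/-- The underlying pointed metric space of the constructed coequalizer is `C` itself, so `V•_∞`
sends the coequalizer diagram to the given split one. -/
lemma preserves (t : IsSplitCoequalizer (Vpinf.map f) (Vpinf.map g) q) :
    PreservesColimit (parallelPair f g) Vpinf := by
  refine preservesColimit_of_preserves_colimit_cocone (isColimit t) ?_
  exact (isColimitMapCoconeCoforkEquiv Vpinf (π_cond t)).symm t.isCoequalizer

end SplitPair

/-- The forgetful functor `V•_∞ : Ban_∞ ⥤ CMet•_∞` is monadic. -/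
theorem Vpinf_monadic : Nonempty (MonadicRightAdjoint Vpinf) := by
  have : Monad.HasCoequalizerOfIsSplitPair Vpinf := ⟨fun f g h => by
    obtain ⟨C, q, ⟨t⟩⟩ := h.splittable
    exact ⟨⟨⟨_, SplitPair.isColimit t⟩⟩⟩⟩
  have : Monad.PreservesColimitOfIsSplitPair Vpinf := ⟨fun f g h => by
    obtain ⟨C, q, ⟨t⟩⟩ := h.splittable
    exact SplitPair.preserves t⟩
  exact ⟨Monad.monadicOfHasPreservesGSplitCoequalizersOfReflectsIsomorphisms freeAdj⟩
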